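/- Let g : ℝ² → ℝ be a Lebesgue measurable function which is odd (g(−v) = −g(v) for all v ∈ ℝ²) and additive on orthogonal pairs: g(v + w) = g(v) + g(w) whenever v·w = 0. Then there exists b ∈ ℝ² such that g(v) = b·v for all v ∈ ℝ². -/

import Mathlib

/-!
Write `g(x, y) = p x + q y` with `p x = g(x, 0)` and `q y = g(0, y)`, both odd. The orthogonal pairs
`(a, b), (b, -a)` and `(a, -b), (b, a)` show that the Cauchy defects
`P(a, b) = p(a + b) - p a - p b` and `Q` (likewise for `q`) satisfy `P(a, b) = -Q(b, -a)` and
`P(a, b) = -Q(a, -b) = Q(-a, b)`. As `Q` is odd and symmetric, `P = -P`, so `p` is additive, and by the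
symmetric relation so is `q`. A measurable additive function on `ℝ` is continuous, hence linear.
-/

open Matrix

/-- Measurable solutions of Cauchy's functional equation are linear. -/
lemma measurable_additive_linear (p : ℝ → ℝ) (hp : Measurable p)
    (hadd : ∀ a b, p (a + b) = p a + p b) (x : ℝ) : p x = p 1 * x := by
  have hc : Continuous (AddMonoidHom.mk' p hadd) :=
    MeasureTheory.Measure.AddMonoidHom.continuous_of_measurable (AddMonoidHom.mk' p hadd) hp
  have h := map_real_smul (AddMonoidHom.mk' p hadd) hc x 1
  simp only [AddMonoidHom.mk'_apply, smul_eq_mul, mul_one] at h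
  rw [h, mul_comm]

/-- A measurable odd function `g : ℝ² → ℝ` which is additive on orthogonal pairs is linear:
`g(v) = b·v` for some `b ∈ ℝ²`. -/
theorem stmt_18 (g : (Fin 2 → ℝ) → ℝ) (hg : Measurable g)
    (hodd : ∀ v : Fin 2 → ℝ, g (-v) = -g v)
    (hadd : ∀ v w : Fin 2 → ℝ, v ⬝ᵥ w = 0 → g (v + w) = g v + g w) :
    ∃ b : Fin 2 → ℝ, ∀ v : Fin 2 → ℝ, g v = b ⬝ᵥ v := by
  obtain ⟨p, hp⟩ : ∃ p : ℝ → ℝ, ∀ x, p x = g ![x, 0] := ⟨_, fun _ => rfl⟩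
  obtain ⟨q, hq⟩ : ∃ q : ℝ → ℝ, ∀ y, q y = g ![0, y] := ⟨_, fun _ => rfl⟩
  have hsplit : ∀ x y, g ![x, y] = p x + q y := by
    intro x y
    have h := hadd ![x, 0] ![0, y] (by simp)
    rw [hp, hq, ← h]
    simp
  have podd : ∀ x, p (-x) = -p x := by
    intro x
    rw [hp, hp, ← hodd]
    simp
  have qodd : ∀ x, q (-x) = -q x := by
    intro x
    rw [hq, hq, ← hodd]
    simp
  have key : ∀ a b, p (a + b) + q (b - a) = p a + p b + q b - q a := by
    intro a b
    have h := hadd ![a, b] ![b, -a] (by simp; ring)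
    have e : ![a, b] + ![b, -a] = ![a + b, b - a] := by
      ext i; fin_cases i <;> simp [sub_eq_add_neg]
    rw [e, hsplit, hsplit, hsplit, qodd] at h
    linarith
  have padd : ∀ a b, p (a + b) = p a + p b := by
    intro a b
    have h1 := key a b
    have h2 := key b a
    have h3 := qodd (a - b)
    rw [neg_sub] at h3
    rw [add_comm b a] at h2
    linarith
  have qadd : ∀ a b, q (a + b) = q a + q b := by
    intro a b
    have h1 := key (-b) a
    rw [padd, qodd, sub_neg_eq_add] at h1
    linarith
  have pm : Measurable p := by
    rw [funext hp]
    exact hg.comp (by fun_prop)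
  have qm : Measurable q := by
    rw [funext hq]
    exact hg.comp (by fun_prop)
  refine ⟨![p 1, q 1], fun v => ?_⟩
  have e : v = ![v 0, v 1] := by
    ext i; fin_cases i <;> rfl
  rw [e, hsplit, measurable_additive_linear p pm padd, measurable_additive_linear q qm qadd]
  simp
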